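/- Fix r ∈ I and suppose φ(p) = p, Dφ_p = id, D²φ_p = 0, k(p,r) = r, D_x k(p,r) = 0, and the second Fréchet derivative of Δ_{r,U,V} at p vanishes for all U, V ∈ ℝⁿ. Then for all U, V, W₁, W₂ ∈ ℝⁿ: a(p,r)(D³φ_p(U,W₁,W₂), V) + a(p,r)(U, D³φ_p(V,W₁,W₂)) = − D²_x k(p,r)(W₁,W₂) · ∂_r a(p,r)(U,V). -/

import Mathlib

/-- The defect of the isometry equation for a generalized conformal structure given
in coordinates by the family of bilinear forms `a(x,r)`, with candidate isometry `φ`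
and fiber reparameterization `k`:
`Δ_{r,U,V}(x) = a(φ(x), k(x,r))(Dφ_x U, Dφ_x V) − a(x,r)(U,V)`. -/
noncomputable def gcsDelta (n : ℕ)
    (a : (Fin n → ℝ) → ℝ → ((Fin n → ℝ) →L[ℝ] (Fin n → ℝ) →L[ℝ] ℝ))
    (φ : (Fin n → ℝ) → (Fin n → ℝ)) (k : (Fin n → ℝ) → ℝ → ℝ)
    (r : ℝ) (U V : Fin n → ℝ) (x : Fin n → ℝ) : ℝ :=
  a (φ x) (k x r) (fderiv ℝ φ x U) (fderiv ℝ φ x V) - a x r U V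

/-!
The defect is the difference of `(y, s, M) ↦ a(y,s)(M U, M V)` evaluated along the two maps
`x ↦ (φ(x), k(x,r), Dφ_x)` and `x ↦ (x, r, id)`. The hypotheses say that these have the same `1`-jet
at `p`, so in the second-order chain rule the terms with the second derivative of the outer
function cancel. What is left is its first derivative in the direction
`(D²φ_p, D²_x k(p,r), D³φ_p)(W₁,W₂)`, whose first entry is zero; by symmetry of `D³φ_p`, the last
entry sends `U` to `D³φ_p(U,W₁,W₂)`.
-/

open Topology

section SecondDerivative

variable {𝕜 E F G : Type*} [NontriviallyNormedField 𝕜]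
  [NormedAddCommGroup E] [NormedSpace 𝕜 E] [NormedAddCommGroup F] [NormedSpace 𝕜 F]
  [NormedAddCommGroup G] [NormedSpace 𝕜 G] {x : E}

theorem eventually_differentiableAt_of_contDiffAt {f : E → F} (hf : ContDiffAt 𝕜 1 f x) :
    ∀ᶠ y in 𝓝 x, DifferentiableAt 𝕜 f y :=
  (hf.eventually (by simp)).mono fun _ hy => hy.differentiableAt one_ne_zero

theorem differentiableAt_fderiv_of_contDiffAt {f : E → F} (hf : ContDiffAt 𝕜 2 f x) :
    DifferentiableAt 𝕜 (fderiv 𝕜 f) x :=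
  (hf.fderiv_right (m := 1) (by norm_num)).differentiableAt one_ne_zero

theorem fderiv_fderiv_sub {f g : E → F} (hf : ContDiffAt 𝕜 2 f x) (hg : ContDiffAt 𝕜 2 g x) :
    fderiv 𝕜 (fderiv 𝕜 fun y => f y - g y) x
      = fderiv 𝕜 (fderiv 𝕜 f) x - fderiv 𝕜 (fderiv 𝕜 g) x := by
  have hfg : fderiv 𝕜 (fun y => f y - g y) =ᶠ[𝓝 x] fun y => fderiv 𝕜 f y - fderiv 𝕜 g y := by
    filter_upwards [eventually_differentiableAt_of_contDiffAt (hf.of_le one_le_two),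
      eventually_differentiableAt_of_contDiffAt (hg.of_le one_le_two)] with y hfy hgy
    exact fderiv_fun_sub hfy hgy
  rw [hfg.fderiv_eq, fderiv_fun_sub (differentiableAt_fderiv_of_contDiffAt hf)
    (differentiableAt_fderiv_of_contDiffAt hg)]

theorem fderiv_fderiv_prodMk_apply {f : E → F} {g : E → G} (hf : ContDiffAt 𝕜 2 f x)
    (hg : ContDiffAt 𝕜 2 g x) (v w : E) :
    fderiv 𝕜 (fderiv 𝕜 fun y => (f y, g y)) x v w
      = (fderiv 𝕜 (fderiv 𝕜 f) x v w, fderiv 𝕜 (fderiv 𝕜 g) x v w) := by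
  have hfg : fderiv 𝕜 (fun y => (f y, g y)) =ᶠ[𝓝 x]
      fun y => (fderiv 𝕜 f y).prod (fderiv 𝕜 g y) := by
    filter_upwards [eventually_differentiableAt_of_contDiffAt (hf.of_le one_le_two),
      eventually_differentiableAt_of_contDiffAt (hg.of_le one_le_two)] with y hfy hgy
    exact hfy.fderiv_prodMk hgy
  have hprod := (ContinuousLinearMap.prodₗᵢ 𝕜).toContinuousLinearEquiv.comp_hasFDerivAt_iff.2
    ((differentiableAt_fderiv_of_contDiffAt hf).hasFDerivAt.prodMk
      (differentiableAt_fderiv_of_contDiffAt hg).hasFDerivAt)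
  rw [hfg.fderiv_eq]
  exact congr($(hprod.fderiv) v w)

theorem fderiv_fderiv_comp_apply {g : F → G} {f : E → F} (hg : ContDiffAt 𝕜 2 g (f x))
    (hf : ContDiffAt 𝕜 2 f x) (v w : E) :
    fderiv 𝕜 (fderiv 𝕜 fun y => g (f y)) x v w
      = fderiv 𝕜 (fderiv 𝕜 g) (f x) (fderiv 𝕜 f x v) (fderiv 𝕜 f x w)
        + fderiv 𝕜 g (f x) (fderiv 𝕜 (fderiv 𝕜 f) x v w) := by
  have hf_near := eventually_differentiableAt_of_contDiffAt (hf.of_le one_le_two)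
  have hg_near := eventually_differentiableAt_of_contDiffAt (hg.of_le one_le_two)
  have hgf : fderiv 𝕜 (fun y => g (f y)) =ᶠ[𝓝 x]
      fun y => (fderiv 𝕜 g (f y)).comp (fderiv 𝕜 f y) := by
    filter_upwards [hf.continuousAt.eventually hg_near, hf_near] with y hgy hfy
    exact fderiv_comp y hgy hfy
  have hDg : HasFDerivAt (fun y => fderiv 𝕜 g (f y)) _ x :=
    (differentiableAt_fderiv_of_contDiffAt hg).hasFDerivAt.comp x
      hf_near.self_of_nhds.hasFDerivAt
  rw [hgf.fderiv_eq, (hDg.clm_comp (differentiableAt_fderiv_of_contDiffAt hf).hasFDerivAt).fderiv]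
  simp [add_comm]

theorem fderiv_fderiv_comp_sub_comp_apply {g : F → G} {f₁ f₂ : E → F}
    (hg : ContDiffAt 𝕜 2 g (f₂ x)) (hf₁ : ContDiffAt 𝕜 2 f₁ x) (hf₂ : ContDiffAt 𝕜 2 f₂ x)
    (hf : f₁ x = f₂ x) (hDf : fderiv 𝕜 f₁ x = fderiv 𝕜 f₂ x) (v w : E) :
    fderiv 𝕜 (fderiv 𝕜 fun y => g (f₁ y) - g (f₂ y)) x v w
      = fderiv 𝕜 g (f₂ x)
          (fderiv 𝕜 (fderiv 𝕜 f₁) x v w - fderiv 𝕜 (fderiv 𝕜 f₂) x v w) := by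
  have hg₁ : ContDiffAt 𝕜 2 g (f₁ x) := hf ▸ hg
  have hsub := fderiv_fderiv_sub (hg₁.comp x hf₁) (hg.comp x hf₂)
  simp only [Function.comp_apply, Function.comp_def] at hsub
  rw [hsub, sub_apply, sub_apply,
    fderiv_fderiv_comp_apply hg₁ hf₁, fderiv_fderiv_comp_apply hg hf₂, hf, hDf, map_sub]
  abel

end SecondDerivative

section ThirdDerivative

variable {𝕜 E F : Type*} [NontriviallyNormedField 𝕜] [NormedAddCommGroup E] [NormedSpace 𝕜 E]
  [NormedAddCommGroup F] [NormedSpace 𝕜 F] {n : WithTop ℕ∞} {f : E → F} {x : E}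

theorem fderiv_clm_apply_apply_const {B : E → E →L[𝕜] E →L[𝕜] F} (hB : DifferentiableAt 𝕜 B x)
    (u v w : E) : fderiv 𝕜 (fun y => B y v w) x u = fderiv 𝕜 B x u v w := by
  rw [((hB.hasFDerivAt.clm_apply (hasFDerivAt_const v x)).clm_apply (hasFDerivAt_const w x)).fderiv]
  simp

theorem isSymmSndFDerivAt_fderiv (hf : ContDiffAt 𝕜 n f x) (hn : minSmoothness 𝕜 3 ≤ n) :
    IsSymmSndFDerivAt 𝕜 (fderiv 𝕜 f) x := by
  refine (hf.fderiv_right (m := minSmoothness 𝕜 2) ?_).isSymmSndFDerivAt le_rfl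
  rwa [← minSmoothness_add, two_add_one_eq_three]

theorem fderiv_fderiv_fderiv_apply_swap (hf : ContDiffAt 𝕜 n f x) (hn : minSmoothness 𝕜 3 ≤ n)
    (u v w : E) :
    fderiv 𝕜 (fderiv 𝕜 (fderiv 𝕜 f)) x u v w = fderiv 𝕜 (fderiv 𝕜 (fderiv 𝕜 f)) x u w v := by
  obtain ⟨m, hm, hmn, hm_ne⟩ := exist_minSmoothness_le_ne_infty (m := 3) hn
  have hsymm : (fun y => fderiv 𝕜 (fderiv 𝕜 f) y v w) =ᶠ[𝓝 x]
      fun y => fderiv 𝕜 (fderiv 𝕜 f) y w v := by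
    filter_upwards [(hf.of_le hmn).eventually hm_ne] with y hy
    exact hy.isSymmSndFDerivAt ((minSmoothness_monotone (by norm_num)).trans hm) v w
  have hD2f : DifferentiableAt 𝕜 (fderiv 𝕜 (fderiv 𝕜 f)) x :=
    differentiableAt_fderiv_of_contDiffAt
      (hf.fderiv_right (by simpa [two_add_one_eq_three] using le_minSmoothness.trans hn))
  rw [← fderiv_clm_apply_apply_const hD2f, hsymm.fderiv_eq, fderiv_clm_apply_apply_const hD2f]

theorem fderiv_fderiv_fderiv_apply_rotate (hf : ContDiffAt 𝕜 n f x)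
    (hn : minSmoothness 𝕜 3 ≤ n) (u v w : E) :
    fderiv 𝕜 (fderiv 𝕜 (fderiv 𝕜 f)) x u v w = fderiv 𝕜 (fderiv 𝕜 (fderiv 𝕜 f)) x v w u := by
  rw [(isSymmSndFDerivAt_fderiv hf hn).eq, fderiv_fderiv_fderiv_apply_swap hf hn]

end ThirdDerivative

section BilinearFamily

variable {𝕜 D E F P X : Type*} [NontriviallyNormedField 𝕜]
  [NormedAddCommGroup D] [NormedSpace 𝕜 D] [NormedAddCommGroup E] [NormedSpace 𝕜 E]
  [NormedAddCommGroup F] [NormedSpace 𝕜 F] [NormedAddCommGroup P] [NormedSpace 𝕜 P]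
  [NormedAddCommGroup X] [NormedSpace 𝕜 X]

theorem fderiv_comp_prodMk_right_apply {f : E × P → F} {x : E} {r : P}
    (hf : DifferentiableAt 𝕜 f (x, r)) (ρ : P) :
    fderiv 𝕜 (fun s => f (x, s)) r ρ = fderiv 𝕜 f (x, r) (0, ρ) :=
  congr($((hf.hasFDerivAt.comp r (hasFDerivAt_prodMk_right x r)).fderiv) ρ)

theorem contDiffAt_bilinear_pullback {m : WithTop ℕ∞} {A : X → E →L[𝕜] E →L[𝕜] F} {x : X}
    (hA : ContDiffAt 𝕜 m A x) (M : D →L[𝕜] E) (U V : D) :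
    ContDiffAt 𝕜 m (fun q : X × (D →L[𝕜] E) => A q.1 (q.2 U) (q.2 V)) (x, M) := by
  have hA_fst : ContDiffAt 𝕜 m (fun q : X × (D →L[𝕜] E) => A q.1) (x, M) :=
    ContDiffAt.comp (g := A) (x, M) hA contDiffAt_fst
  exact (hA_fst.clm_apply (contDiffAt_snd.clm_apply contDiffAt_const)).clm_apply
    (contDiffAt_snd.clm_apply contDiffAt_const)

theorem fderiv_bilinear_pullback_apply {A : X → E →L[𝕜] E →L[𝕜] F} {x : X}
    (hA : DifferentiableAt 𝕜 A x) (M : D →L[𝕜] E) (U V : D) (ξ : X) (N : D →L[𝕜] E) :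
    fderiv 𝕜 (fun q : X × (D →L[𝕜] E) => A q.1 (q.2 U) (q.2 V)) (x, M) (ξ, N)
      = fderiv 𝕜 A x ξ (M U) (M V) + A x (N U) (M V) + A x (M U) (N V) := by
  have hA_fst := HasFDerivAt.comp (g := A) (x, M) hA.hasFDerivAt (hasFDerivAt_fst (𝕜 := 𝕜))
  have hsnd (Z : D) :=
    (hasFDerivAt_snd (𝕜 := 𝕜) (p := (x, M))).clm_apply (hasFDerivAt_const Z (x, M))
  have hpullback := (hA_fst.clm_apply (hsnd U)).clm_apply (hsnd V)
  refine congr($(hpullback.fderiv) (ξ, N)).trans ?_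
  simp only [Function.comp_apply, ContinuousLinearMap.comp_zero, zero_add,
    ContinuousLinearMap.flip_add, add_apply, ContinuousLinearMap.comp_apply,
    ContinuousLinearMap.flip_apply, ContinuousLinearMap.coe_snd', ContinuousLinearMap.coe_fst']
  abel

theorem fderiv_apply_apply_eq_smul_deriv (B : 𝕜 → E →L[𝕜] E →L[𝕜] F) (r c : 𝕜) (U V : E) :
    fderiv 𝕜 B r c U V = c • deriv B r U V :=
  congr($(fderiv_eq_smul_deriv (F := E →L[𝕜] E →L[𝕜] F) (f := B) (x := r) c) U V)

end BilinearFamily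

section JetLift

variable {𝕜 D E P : Type*} [NontriviallyNormedField 𝕜]
  [NormedAddCommGroup D] [NormedSpace 𝕜 D] [NormedAddCommGroup E] [NormedSpace 𝕜 E]
  [NormedAddCommGroup P] [NormedSpace 𝕜 P]

variable (𝕜) in
/-- The lift `x ↦ ((φ(x), k(x)), Dφ_x)` of a map `φ` and a parameter function `k`, along which the
isometry defect is a difference of values of one fixed function. -/
noncomputable def jetLift (φ : D → E) (k : D → P) (x : D) : (E × P) × (D →L[𝕜] E) :=
  ((φ x, k x), fderiv 𝕜 φ x)

variable {φ : D → E} {k : D → P} {x : D}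

theorem contDiffAt_jetLift (hφ : ContDiffAt 𝕜 3 φ x) (hk : ContDiffAt 𝕜 2 k x) :
    ContDiffAt 𝕜 2 (jetLift 𝕜 φ k) x :=
  ((hφ.of_le (by norm_num)).prodMk hk).prodMk (hφ.fderiv_right two_add_one_eq_three.le)

theorem fderiv_jetLift_apply (hφ : ContDiffAt 𝕜 2 φ x) (hk : DifferentiableAt 𝕜 k x) (v : D) :
    fderiv 𝕜 (jetLift 𝕜 φ k) x v
      = ((fderiv 𝕜 φ x v, fderiv 𝕜 k x v), fderiv 𝕜 (fderiv 𝕜 φ) x v) :=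
  congr($((((hφ.differentiableAt two_ne_zero).hasFDerivAt.prodMk hk.hasFDerivAt).prodMk
    (differentiableAt_fderiv_of_contDiffAt hφ).hasFDerivAt).fderiv) v)

theorem fderiv_fderiv_jetLift_apply (hφ : ContDiffAt 𝕜 3 φ x) (hk : ContDiffAt 𝕜 2 k x)
    (v w : D) :
    fderiv 𝕜 (fderiv 𝕜 (jetLift 𝕜 φ k)) x v w
      = ((fderiv 𝕜 (fderiv 𝕜 φ) x v w, fderiv 𝕜 (fderiv 𝕜 k) x v w),
          fderiv 𝕜 (fderiv 𝕜 (fderiv 𝕜 φ)) x v w) := by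
  have hφ2 : ContDiffAt 𝕜 2 φ x := hφ.of_le (by norm_num)
  have hDφ : ContDiffAt 𝕜 2 (fderiv 𝕜 φ) x := hφ.fderiv_right two_add_one_eq_three.le
  unfold jetLift
  rw [fderiv_fderiv_prodMk_apply (hφ2.prodMk hk) hDφ, fderiv_fderiv_prodMk_apply hφ2 hk]

end JetLift

section IsometryDefect

variable {𝕜 E F P : Type*} [NontriviallyNormedField 𝕜]
  [NormedAddCommGroup E] [NormedSpace 𝕜 E] [NormedAddCommGroup F] [NormedSpace 𝕜 F]
  [NormedAddCommGroup P] [NormedSpace 𝕜 P]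

variable (𝕜) in
/-- The defect of the isometry equation for a family `a` of bilinear forms on a normed space `E`
over `𝕜`, with values in `F` and parameters in `P`; this is `gcsDelta` with the reparameterization
`k(·,r)` as a function `k` of the base point alone. -/
noncomputable def isometryDefect (a : E → P → E →L[𝕜] E →L[𝕜] F) (φ : E → E) (k : E → P) (r : P)
    (U V : E) (x : E) : F :=
  a (φ x) (k x) (fderiv 𝕜 φ x U) (fderiv 𝕜 φ x V) - a x r U V

variable {n : WithTop ℕ∞} {a : E → P → E →L[𝕜] E →L[𝕜] F} {φ : E → E} {k : E → P} {p : E} {r : P}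

theorem fderiv_fderiv_isometryDefect_apply
    (ha : ContDiffAt 𝕜 2 (fun q : E × P => a q.1 q.2) (p, r)) (hφ : ContDiffAt 𝕜 n φ p)
    (hn : minSmoothness 𝕜 3 ≤ n) (hk : ContDiffAt 𝕜 2 k p)
    (hφp : φ p = p) (hDφp : fderiv 𝕜 φ p = ContinuousLinearMap.id 𝕜 E)
    (hD2φp : fderiv 𝕜 (fderiv 𝕜 φ) p = 0) (hkp : k p = r) (hDk : fderiv 𝕜 k p = 0)
    (U V W₁ W₂ : E) :
    fderiv 𝕜 (fderiv 𝕜 (isometryDefect 𝕜 a φ k r U V)) p W₁ W₂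
      = fderiv 𝕜 (fun s => a p s) r (fderiv 𝕜 (fderiv 𝕜 k) p W₁ W₂) U V
        + a p r (fderiv 𝕜 (fderiv 𝕜 (fderiv 𝕜 φ)) p U W₁ W₂) V
        + a p r U (fderiv 𝕜 (fderiv 𝕜 (fderiv 𝕜 φ)) p V W₁ W₂) := by
  have hφ3 : ContDiffAt 𝕜 3 φ p := hφ.of_le (le_minSmoothness.trans hn)
  let g (q : (E × P) × (E →L[𝕜] E)) : F := a q.1.1 q.1.2 (q.2 U) (q.2 V)
  let lift : E → (E × P) × (E →L[𝕜] E) := jetLift 𝕜 φ k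
  let base : E → (E × P) × (E →L[𝕜] E) := jetLift 𝕜 id fun _ => r
  have hbase : base p = ((p, r), ContinuousLinearMap.id 𝕜 E) := by
    simp [base, jetLift]
  have hg : ContDiffAt 𝕜 2 g (base p) :=
    hbase ▸ contDiffAt_bilinear_pullback ha (ContinuousLinearMap.id 𝕜 E) U V
  have hDid : fderiv 𝕜 (id : E → E) = fun _ => ContinuousLinearMap.id 𝕜 E :=
    funext fun _ => fderiv_id
  have hlift_base : lift p = base p := by
    rw [hbase]
    simp [lift, jetLift, hφp, hkp, hDφp]
  have hDlift_base : fderiv 𝕜 lift p = fderiv 𝕜 base p := by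
    ext1 w
    rw [fderiv_jetLift_apply (hφ3.of_le (by norm_num)) (hk.differentiableAt two_ne_zero),
      fderiv_jetLift_apply contDiffAt_id (differentiableAt_const r)]
    simp [hDφp, hD2φp, hDk, hDid]
  have hdefect : isometryDefect 𝕜 a φ k r U V = fun x => g (lift x) - g (base x) := by
    ext x
    simp [isometryDefect, g, lift, base, jetLift]
  rw [hdefect, fderiv_fderiv_comp_sub_comp_apply hg (contDiffAt_jetLift hφ3 hk)
    (contDiffAt_jetLift contDiffAt_id contDiffAt_const) hlift_base hDlift_base,
    fderiv_fderiv_jetLift_apply hφ3 hk,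
    fderiv_fderiv_jetLift_apply contDiffAt_id contDiffAt_const, hbase,
    fderiv_comp_prodMk_right_apply (ha.differentiableAt two_ne_zero),
    fderiv_fderiv_fderiv_apply_rotate hφ hn U, fderiv_fderiv_fderiv_apply_rotate hφ hn V]
  refine (fderiv_bilinear_pullback_apply (ha.differentiableAt two_ne_zero) _ U V _ _).trans ?_
  simp [hD2φp, hDid]

theorem gcs_third_jet_equation_general
    (ha : ContDiffAt 𝕜 2 (fun q : E × P => a q.1 q.2) (p, r)) (hφ : ContDiffAt 𝕜 n φ p)
    (hn : minSmoothness 𝕜 3 ≤ n) (hk : ContDiffAt 𝕜 2 k p)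
    (hφp : φ p = p) (hDφp : fderiv 𝕜 φ p = ContinuousLinearMap.id 𝕜 E)
    (hD2φp : fderiv 𝕜 (fderiv 𝕜 φ) p = 0) (hkp : k p = r) (hDk : fderiv 𝕜 k p = 0) {U V W₁ W₂ : E}
    (hΔ'' : fderiv 𝕜 (fderiv 𝕜 (isometryDefect 𝕜 a φ k r U V)) p W₁ W₂ = 0) :
    a p r (fderiv 𝕜 (fderiv 𝕜 (fderiv 𝕜 φ)) p U W₁ W₂) V
        + a p r U (fderiv 𝕜 (fderiv 𝕜 (fderiv 𝕜 φ)) p V W₁ W₂)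
      = -fderiv 𝕜 (fun s => a p s) r (fderiv 𝕜 (fderiv 𝕜 k) p W₁ W₂) U V := by
  rw [fderiv_fderiv_isometryDefect_apply ha hφ hn hk hφp hDφp hD2φp hkp hDk, add_assoc] at hΔ''
  exact (neg_eq_of_add_eq_zero_right hΔ'').symm

end IsometryDefect

/-- If `φ` has trivial `2`-jet at `p`, `k(p,r) = r`, `D_x k(p,r) = 0`, and the second
Fréchet derivative at `p` of the isometry defect `Δ_{r,U,V}` vanishes, then
`a(p,r)(D³φ_p(U,W₁,W₂), V) + a(p,r)(U, D³φ_p(V,W₁,W₂))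
  = − D²_x k(p,r)(W₁,W₂) · ∂_r a(p,r)(U,V)`. -/
theorem gcs_third_jet_equation
    (n : ℕ) (Ω : Set (Fin n → ℝ)) (hΩ : IsOpen Ω)
    (p : Fin n → ℝ) (hp : p ∈ Ω)
    (I : Set ℝ) (hIopen : IsOpen I) (hIconn : I.OrdConnected)
    (a : (Fin n → ℝ) → ℝ → ((Fin n → ℝ) →L[ℝ] (Fin n → ℝ) →L[ℝ] ℝ))
    (ha_smooth : ContDiffOn ℝ (⊤ : ℕ∞) (fun q : (Fin n → ℝ) × ℝ => a q.1 q.2) (Ω ×ˢ I))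
    (ha_symm : ∀ x ∈ Ω, ∀ r ∈ I, ∀ U V : Fin n → ℝ, a x r U V = a x r V U)
    (ha_pos : ∀ x ∈ Ω, ∀ r ∈ I, ∀ U : Fin n → ℝ, U ≠ 0 → 0 < a x r U U)
    (φ : (Fin n → ℝ) → (Fin n → ℝ)) (hφ : ContDiffOn ℝ (⊤ : ℕ∞) φ Ω)
    (k : (Fin n → ℝ) → ℝ → ℝ)
    (hk : ContDiffOn ℝ (⊤ : ℕ∞) (fun q : (Fin n → ℝ) × ℝ => k q.1 q.2) (Ω ×ˢ I))
    (hk_maps : ∀ x ∈ Ω, ∀ r ∈ I, k x r ∈ I)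
    (r : ℝ) (hr : r ∈ I)
    (hφp : φ p = p)
    (hDφp : fderiv ℝ φ p = ContinuousLinearMap.id ℝ (Fin n → ℝ))
    (hD2φp : fderiv ℝ (fderiv ℝ φ) p = 0)
    (hkp : k p r = r)
    (hDk : fderiv ℝ (fun x => k x r) p = 0)
    (hΔ'' : ∀ U V : Fin n → ℝ,
      fderiv ℝ (fderiv ℝ (gcsDelta n a φ k r U V)) p = 0) :
    ∀ U V W₁ W₂ : Fin n → ℝ,
      a p r (fderiv ℝ (fderiv ℝ (fderiv ℝ φ)) p U W₁ W₂) V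
        + a p r U (fderiv ℝ (fderiv ℝ (fderiv ℝ φ)) p V W₁ W₂)
      = -(fderiv ℝ (fderiv ℝ (fun x => k x r)) p W₁ W₂)
          * deriv (fun s => a p s) r U V := by
  intro U V W₁ W₂
  have hΩI : Ω ×ˢ I ∈ 𝓝 (p, r) := prod_mem_nhds (hΩ.mem_nhds hp) (hIopen.mem_nhds hr)
  have hkr : ContDiffAt ℝ (⊤ : ℕ∞) (fun x => k x r) p :=
    (hk.contDiffAt hΩI).comp p (contDiffAt_id.prodMk contDiffAt_const)
  have hle (m : ℕ) : (m : WithTop ℕ∞) ≤ (⊤ : ℕ∞) := mod_cast le_top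
  have hgeneral := gcs_third_jet_equation_general (k := fun x => k x r)
    ((ha_smooth.contDiffAt hΩI).of_le (hle 2)) (hφ.contDiffAt (hΩ.mem_nhds hp))
    (by simpa using hle 3) (hkr.of_le (hle 2)) hφp hDφp hD2φp hkp hDk congr($(hΔ'' U V) W₁ W₂)
  rwa [fderiv_apply_apply_eq_smul_deriv, smul_eq_mul, ← neg_mul] at hgeneral
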